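/- arXiv:math/9411212 — 3 statements merged into one kernel-verified Lean document; each statement's English description precedes it below -/
import Mathlib

section
/- For every prime q, the number m₄(-q) of quartic number fields of discriminant -q is O(q^{7/8} (log q)^4), with an absolute implied constant. -/
/-- The predicate that a subfield `K` of `ℂ` is a quartic number field of discriminant
`-q`.  (Every number field embeds into `ℂ`, so every quartic field of discriminant `-q`
is isomorphic to such a subfield.) -/
def IsQuarticOfDisc (q : ℕ) (K : Subfield ℂ) : Prop :=
  Module.finrank ℚ K = 4 ∧ ∀ [NumberField K], NumberField.discr K = -(q : ℤ)

/-- Two such subfields are identified when they are isomorphic as fields, so that the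
equivalence classes are exactly the isomorphism classes of quartic number fields of
discriminant `-q`. -/
def quarticSetoid (q : ℕ) : Setoid {K : Subfield ℂ // IsQuarticOfDisc q K} :=
  ⟨fun K L => Nonempty (K.1 ≃+* L.1),
    ⟨fun _ => ⟨RingEquiv.refl _⟩, fun ⟨e⟩ => ⟨e.symm⟩, fun ⟨e⟩ ⟨e'⟩ => ⟨e.trans e'⟩⟩⟩

/-- The number `m₄(-q)` of isomorphism classes of quartic number fields of
discriminant `-q`. -/
noncomputable def m₄ (q : ℕ) : ℕ := Nat.card (Quotient (quarticSetoid q))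

open NumberField in
/-- A small non-rational integer, from Minkowski's theorem. -/
lemma exists_small_integer (K : Type*) [Field K] [NumberField K] (q : ℕ) (hq : q.Prime)
    (h4 : Module.finrank ℚ K = 4) (hd : discr K = -(q : ℤ)) :
    ∃ a : 𝓞 K, (∀ n : ℤ, a ≠ n) ∧
      ∀ w : InfinitePlace K, w (a : K) ≤ (q : ℝ) ^ ((1 : ℝ) / 6) := by
  classical
  have hq0 : (0 : ℝ) < q := by exact_mod_cast hq.pos
  have hq1 : (1 : ℝ) ≤ q := by exact_mod_cast hq.one_le
  have hsig := InfinitePlace.card_add_two_mul_card_eq_rank K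
  rw [h4] at hsig
  have hsign := sign_discr K
  rw [hd, Int.sign_neg, Int.sign_natCast_of_ne_zero hq.ne_zero] at hsign
  have hc : InfinitePlace.nrComplexPlaces K = 1 := by
    have : InfinitePlace.nrComplexPlaces K ≤ 2 := by omega
    interval_cases h : InfinitePlace.nrComplexPlaces K <;> simp_all
  have hr : InfinitePlace.nrRealPlaces K = 2 := by omega
  obtain ⟨⟨w₀, hw₀⟩⟩ : Nonempty {w : InfinitePlace K // w.IsReal} := by
    rw [← Fintype.card_pos_iff]
    change 0 < InfinitePlace.nrRealPlaces K
    omega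
  set B : NNReal := (q : NNReal) ^ ((1 : ℝ) / 6) with hB
  have hBr : (B : ℝ) = (q : ℝ) ^ ((1 : ℝ) / 6) := by simp [hB]
  have hB3 : B ^ 3 = NNReal.sqrt q := by
    rw [hB, ← NNReal.rpow_natCast, ← NNReal.rpow_mul, NNReal.sqrt_eq_rpow]
    norm_num
  have hB1 : 1 ≤ B := by
    rw [← NNReal.coe_le_coe, hBr]
    exact Real.one_le_rpow hq1 (by norm_num)
  let f : InfinitePlace K → NNReal := fun w => if w = w₀ then 1 else B
  have hprod : ∏ w, (f w) ^ (w.mult) = B ^ 3 := by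
    rw [← Finset.mul_prod_erase _ _ (Finset.mem_univ w₀)]
    have h1 : ∏ w ∈ Finset.univ.erase w₀, f w ^ w.mult
        = B ^ (∑ w ∈ Finset.univ.erase w₀, w.mult) := by
      rw [← Finset.prod_pow_eq_pow_sum]
      exact Finset.prod_congr rfl fun w hw => by simp [f, Finset.ne_of_mem_erase hw]
    have h2 := InfinitePlace.sum_mult_eq (K := K)
    rw [← Finset.add_sum_erase _ _ (Finset.mem_univ w₀), h4] at h2
    have h3 : w₀.mult = 1 := by simp [InfinitePlace.mult, hw₀]
    rw [h1, show ∑ w ∈ Finset.univ.erase w₀, w.mult = 3 by omega]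
    simp [f]
  have hlt : mixedEmbedding.minkowskiBound K ↑1 <
      MeasureTheory.volume (mixedEmbedding.convexBodyLT K f) := by
    rw [mixedEmbedding.convexBodyLT_volume, hprod, mixedEmbedding.minkowskiBound,
      mixedEmbedding.volume_fundamentalDomain_fractionalIdealLatticeBasis,
      Units.val_one, FractionalIdeal.absNorm_one, Rat.cast_one,
      ENNReal.ofReal_one, one_mul, mixedEmbedding.finrank,
      mixedEmbedding.volume_fundamentalDomain_latticeBasis, h4, hB3, hc, hd,
      mixedEmbedding.convexBodyLTFactor, hr, hc]
    have hn : ‖(-(q:ℤ))‖₊ = (q : NNReal) := by simp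
    have hs : 0 < NNReal.sqrt q := by
      rw [NNReal.sqrt_pos]; exact_mod_cast hq.pos
    have e : (2 : ENNReal)⁻¹ ^ 1 * 2 ^ 4 = ((8 : NNReal) : ENNReal) := by
      rw [pow_one, pow_succ', ← mul_assoc, ENNReal.inv_mul_cancel (by simp) (by simp)]
      norm_num
    rw [hn, mul_right_comm, e]
    norm_cast
    rw [pow_one]
    refine mul_lt_mul_of_pos_right ?_ hs
    rw [← NNReal.coe_lt_coe]
    push_cast
    simp only [NNReal.coe_real_pi]
    linarith [Real.pi_gt_three]
  obtain ⟨a, ha0, ha⟩ := mixedEmbedding.exists_ne_zero_mem_ringOfIntegers_lt K hlt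
  refine ⟨a, ?_, fun w => ?_⟩
  · rintro n rfl
    have h := ha w₀
    have hn0 : n ≠ 0 := by rintro rfl; simp at ha0
    have : (1 : ℝ) ≤ |(n : ℝ)| := by exact_mod_cast Int.one_le_abs hn0
    have h' : w₀ ((n : 𝓞 K) : K) = |(n : ℝ)| := by
      rw [← InfinitePlace.norm_embedding_eq]
      simp
    rw [h'] at h
    simp [f] at h
    linarith
  · rw [← hBr]
    refine (ha w).le.trans ?_
    simp only [f]
    split_ifs
    · exact_mod_cast hB1
    · exact le_rfl

open NumberField IntermediateField in
/-- A quartic field of prime discriminant has no proper intermediate fields. -/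
lemma adjoin_eq_top_of_prime_disc (K : Type*) [Field K] [NumberField K] (q : ℕ) (hq : q.Prime)
    (hd : discr K = -(q : ℤ)) (b : K) (hb : ∀ r : ℚ, b ≠ algebraMap ℚ K r) : ℚ⟮b⟯ = ⊤ := by
  have h1 : Module.finrank ℚ ℚ⟮b⟯ ≠ 1 := by
    intro h
    rw [IntermediateField.finrank_eq_one_iff, IntermediateField.adjoin_simple_eq_bot_iff,
      IntermediateField.mem_bot] at h
    obtain ⟨r, hr⟩ := h
    exact hb r hr.symm
  have h2 : 1 < Module.finrank ℚ ℚ⟮b⟯ := by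
    have : 0 < Module.finrank ℚ ℚ⟮b⟯ := Module.finrank_pos
    omega
  have h3 := abs_discr_gt_two h2
  have h4 := natAbs_discr_eq_absNorm_differentIdeal_mul_natAbs_discr_pow ℚ⟮b⟯ (𝓞 ℚ⟮b⟯) K (𝓞 K)
  rw [hd] at h4
  simp only [Int.natAbs_neg, Int.natAbs_natCast] at h4
  rw [Int.abs_eq_natAbs] at h3
  have h5 : Module.finrank ℚ⟮b⟯ K = 1 := by
    by_contra hne
    have hpos : 0 < Module.finrank ℚ⟮b⟯ K := Module.finrank_pos
    have hdvd : (discr ℚ⟮b⟯).natAbs ^ 2 ∣ q := by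
      rw [h4]
      exact (pow_dvd_pow _ (by omega)).mul_left _
    have hu : IsUnit (discr ℚ⟮b⟯).natAbs :=
      hq.prime.irreducible.squarefree _ (by rwa [← pow_two])
    rw [Nat.isUnit_iff] at hu
    omega
  exact IntermediateField.finrank_eq_one_iff_eq_top.mp h5

/-- Discriminant of the depressed quartic. -/
def quarticD {R : Type*} [CommRing R] (p r s : R) : R :=
  256 * s ^ 3 - 128 * p ^ 2 * s ^ 2 + 144 * p * r ^ 2 * s + 16 * p ^ 4 * s - 27 * r ^ 4
    - 4 * p ^ 3 * r ^ 2

lemma quarticD_roots {R : Type*} [CommRing R] (x : Fin 4 → R) (h : ∑ i, x i = 0) (p r s : R)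
    (hp : p = x 0 * x 1 + x 0 * x 2 + x 0 * x 3 + x 1 * x 2 + x 1 * x 3 + x 2 * x 3)
    (hr : r = -(x 0 * x 1 * x 2 + x 0 * x 1 * x 3 + x 0 * x 2 * x 3 + x 1 * x 2 * x 3))
    (hs : s = x 0 * x 1 * x 2 * x 3) :
    (Matrix.vandermonde x).det ^ 2 = quarticD p r s := by
  have h3 : x 3 = -(x 0 + x 1 + x 2) := by
    rw [Fin.sum_univ_four] at h
    linear_combination h
  rw [Matrix.det_vandermonde]
  have e : (∏ i : Fin 4, ∏ j ∈ Finset.Ioi i, (x j - x i)) =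
      (x 1 - x 0) * (x 2 - x 0) * (x 3 - x 0) * ((x 2 - x 1) * (x 3 - x 1)) * (x 3 - x 2) := by
    have i0 : Finset.Ioi (0 : Fin 4) = {1, 2, 3} := by decide
    have i1 : Finset.Ioi (1 : Fin 4) = {2, 3} := by decide
    have i2 : Finset.Ioi (2 : Fin 4) = {3} := by decide
    have i3 : Finset.Ioi (3 : Fin 4) = ∅ := by decide
    rw [Fin.prod_univ_four, i0, i1, i2, i3]
    simp [Finset.prod_insert, mul_assoc]
  rw [e, hp, hr, hs, quarticD, h3]
  ring

open Polynomial in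
lemma quartic_expand (x : Fin 4 → ℂ) (h : ∑ i, x i = 0) :
    ∏ i, (X - C (x i)) = X ^ 4
      + C (x 0 * x 1 + x 0 * x 2 + x 0 * x 3 + x 1 * x 2 + x 1 * x 3 + x 2 * x 3) * X ^ 2
      + C (-(x 0 * x 1 * x 2 + x 0 * x 1 * x 3 + x 0 * x 2 * x 3 + x 1 * x 2 * x 3)) * X
      + C (x 0 * x 1 * x 2 * x 3) := by
  have h3 : x 3 = -(x 0 + x 1 + x 2) := by
    rw [Fin.sum_univ_four] at h
    linear_combination h
  rw [Fin.prod_univ_four, h3]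
  simp only [map_add, map_mul, map_neg]
  ring

set_option maxHeartbeats 1000000 in
open NumberField IntermediateField Polynomial in
lemma exists_quartic_poly (K : Type*) [Field K] [NumberField K] (h4 : Module.finrank ℚ K = 4)
    (b : 𝓞 K) (hb : ℚ⟮(b : K)⟯ = ⊤) (htr : Algebra.trace ℚ K b = 0) (R : ℝ)
    (hR : ∀ φ : K →+* ℂ, ‖φ b‖ ≤ R) :
    ∃ p r s : ℤ, minpoly ℚ (b : K) = X ^ 4 + C (p : ℚ) * X ^ 2 + C (r : ℚ) * X + C (s : ℚ) ∧
      |(p : ℝ)| ≤ 6 * R ^ 2 ∧ |(r : ℝ)| ≤ 4 * R ^ 3 ∧ |(s : ℝ)| ≤ R ^ 4 ∧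
      discr K ∣ quarticD p r s := by
  classical
  have hcard : Fintype.card (K →ₐ[ℚ] ℂ) = 4 := by
    rw [AlgHom.card, h4]
  let e : Fin 4 ≃ (K →ₐ[ℚ] ℂ) := (Fintype.equivFinOfCardEq hcard).symm
  let x : Fin 4 → ℂ := fun i => e i b
  have hxinj : Function.Injective x := by
    intro i j hij
    apply e.injective
    have hle : (⊤ : IntermediateField ℚ K) ≤
        (AlgHom.equalizer (e i) (e j)).toIntermediateField' (Subalgebra.isField_of_algebraic _) := by
      rw [← hb, adjoin_simple_le_iff]
      exact hij
    ext y
    exact hle (x := y) trivial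
  have hsum : ∑ i, x i = 0 := by
    have := trace_eq_sum_embeddings (K := ℚ) (L := K) ℂ (x := (b : K))
    rw [htr, map_zero, ← e.sum_comp] at this
    exact this.symm
  have hint : IsIntegral ℤ (b : K) := b.isIntegral_coe
  have hintQ : IsIntegral ℚ (b : K) := IsIntegral.of_finite ℚ _
  have hgf : minpoly ℚ (b : K) = (minpoly ℤ (b : K)).map (algebraMap ℤ ℚ) :=
    minpoly.isIntegrallyClosed_eq_field_fractions' ℚ hint
  have hdeg : (minpoly ℚ (b : K)).natDegree = 4 := by
    rw [← adjoin.finrank hintQ, hb, finrank_top', h4]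
  have hmon : (minpoly ℚ (b : K)).Monic := minpoly.monic hintQ
  have hprod : (minpoly ℚ (b : K)).map (algebraMap ℚ ℂ) = ∏ i, (X - C (x i)) := by
    apply eq_of_monic_of_dvd_of_natDegree_le
    · exact monic_prod_of_monic _ _ fun i _ => monic_X_sub_C _
    · exact hmon.map _
    · apply Finset.prod_dvd_of_coprime
      · intro i _ j _ hij
        exact pairwise_coprime_X_sub_C hxinj hij
      · intro i _
        rw [dvd_iff_isRoot, IsRoot, eval_map_algebraMap]
        change aeval (e i (b : K)) _ = 0
        rw [aeval_algHom_apply, minpoly.aeval, map_zero]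
    · rw [natDegree_map, hdeg, natDegree_finsetProd_X_sub_C_eq_card]
      simp
  have hroot : ∀ z ∈ ((minpoly ℚ (b : K)).map (algebraMap ℚ ℂ)).roots, ‖z‖ ≤ R := by
    intro z hz
    have hz' := isRoot_of_mem_roots hz
    rw [hprod, IsRoot, eval_prod, Finset.prod_eq_zero_iff] at hz'
    obtain ⟨i, -, hi⟩ := hz'
    rw [eval_sub, eval_X, eval_C, sub_eq_zero] at hi
    rw [hi]
    exact hR (e i : K →+* ℂ)
  have hcoef := fun i => coeff_le_of_roots_le (f := algebraMap ℚ ℂ) i hmon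
    (IsAlgClosed.splits _) hroot
  have hexp := quartic_expand x hsum
  set g := minpoly ℤ (b : K) with hg
  have hgm : (minpoly ℚ (b : K)).map (algebraMap ℚ ℂ) = g.map (Int.castRingHom ℂ) := by
    rw [hgf, Polynomial.map_map]; congr 1
  have hfc : ∀ i, (g.coeff i : ℂ) = ((minpoly ℚ (b : K)).map (algebraMap ℚ ℂ)).coeff i := by
    intro i; rw [hgm]; simp
  have c0 : (g.coeff 0 : ℂ) = x 0 * x 1 * x 2 * x 3 := by
    rw [hfc, hprod, hexp]; simp [coeff_X_pow, coeff_X, coeff_C]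
  have c1 : (g.coeff 1 : ℂ) =
      -(x 0 * x 1 * x 2 + x 0 * x 1 * x 3 + x 0 * x 2 * x 3 + x 1 * x 2 * x 3) := by
    rw [hfc, hprod, hexp, coeff_add, coeff_add, coeff_add, coeff_C_mul, coeff_C_mul]
    simp [coeff_X_pow, coeff_X]
  have c2 : (g.coeff 2 : ℂ) =
      x 0 * x 1 + x 0 * x 2 + x 0 * x 3 + x 1 * x 2 + x 1 * x 3 + x 2 * x 3 := by
    rw [hfc, hprod, hexp, coeff_add, coeff_add, coeff_add, coeff_C_mul, coeff_C_mul]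
    simp [coeff_X_pow, coeff_X]
  have hnorm : ∀ i, |(g.coeff i : ℝ)| ≤ R ^ (4 - i) * (Nat.choose 4 i) := by
    intro i
    have := hcoef i
    rw [← hfc, hdeg] at this
    simpa using this
  refine ⟨g.coeff 2, g.coeff 1, g.coeff 0, ?_, ?_, ?_, ?_, ?_⟩
  · apply Polynomial.map_injective (algebraMap ℚ ℂ) (algebraMap ℚ ℂ).injective
    rw [hprod, hexp, ← c0, ← c1, ← c2]
    simp
  · have := hnorm 2
    rw [show Nat.choose 4 2 = 6 by decide] at this
    norm_num at this; linarith
  · have := hnorm 1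
    rw [show Nat.choose 4 1 = 4 by decide] at this
    norm_num at this; linarith
  · have := hnorm 0
    rw [show Nat.choose 4 0 = 1 by decide] at this
    norm_num at this; linarith
  · -- the discriminant
    have hι : Fintype.card (Module.Free.ChooseBasisIndex ℤ (𝓞 K)) = 4 := by
      rw [← Module.finrank_eq_card_chooseBasisIndex, RingOfIntegers.rank, h4]
    let ε : Module.Free.ChooseBasisIndex ℤ (𝓞 K) ≃ Fin 4 := Fintype.equivFinOfCardEq hι
    let B := (RingOfIntegers.basis K).reindex ε
    let v : Fin 4 → K := fun i => (b : K) ^ (i : ℕ)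
    let P : Matrix (Fin 4) (Fin 4) ℤ := Matrix.of fun i j => B.repr (b ^ (i : ℕ)) j
    let c : Fin 4 → K := fun i => (B i : K)
    have hv : v = Matrix.mulVec ((P.map (Int.castRingHom ℚ)).map (algebraMap ℚ K)) c := by
      funext i
      have h1 := B.sum_repr (b ^ (i : ℕ))
      have h2 := congrArg (algebraMap (𝓞 K) K) h1
      simp only [map_sum, map_pow] at h2
      simp only [v, Matrix.mulVec, dotProduct, Matrix.map_apply, Matrix.of_apply, P, c]
      rw [← h2]
      refine Finset.sum_congr rfl fun j _ => ?_
      simp [zsmul_eq_mul]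
    have hd1 := Algebra.discr_of_matrix_mulVec (A := ℚ) c (P.map (Int.castRingHom ℚ))
    rw [← hv] at hd1
    have hd2 : Algebra.discr ℚ c = discr K := by
      rw [coe_discr, ← Algebra.discr_reindex ℚ (integralBasis K) ε]
      congr 1
      funext i
      simp [c, B, integralBasis_apply]
    have hd3 := Algebra.discr_eq_det_embeddingsMatrixReindex_pow_two ℚ ℂ v e
    have hd4 : Algebra.embeddingsMatrixReindex ℚ ℂ v e = (Matrix.vandermonde x).transpose := by
      ext i j
      simp [Algebra.embeddingsMatrixReindex, Algebra.embeddingsMatrix, Matrix.vandermonde, v, x]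
    rw [hd4, Matrix.det_transpose, quarticD_roots x hsum _ _ _ c2 c1 c0, hd1, hd2] at hd3
    have hdet : (P.map (Int.castRingHom ℚ)).det = (P.det : ℚ) := by
      rw [← RingHom.mapMatrix_apply, ← RingHom.map_det]; simp
    rw [hdet] at hd3
    refine ⟨P.det ^ 2, ?_⟩
    generalize P.det = d at hd3 ⊢
    have : (((discr K) * d ^ 2 : ℤ) : ℂ) =
        ((quarticD (g.coeff 2) (g.coeff 1) (g.coeff 0) : ℤ) : ℂ) := by
      simp only [quarticD] at hd3 ⊢
      push_cast at hd3 ⊢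
      rw [← hd3]
      simp
      ring
    exact_mod_cast this.symm

open Polynomial in
lemma card_s_le (q : ℕ) (hq : q.Prime) (hq2 : 2 < q) (p r : ℤ) (S : Finset ℤ)
    (hS : ∀ s ∈ S, |s| ≤ 4096 * q ∧ (q : ℤ) ∣ quarticD p r s) : S.card ≤ 24579 := by
  classical
  have : Fact q.Prime := ⟨hq⟩
  let F : (ZMod q)[X] := C 256 * X ^ 3 + C (-128 * (p : ZMod q) ^ 2) * X ^ 2
    + C (144 * (p : ZMod q) * r ^ 2 + 16 * (p : ZMod q) ^ 4) * X
    + C (-27 * (r : ZMod q) ^ 4 - 4 * (p : ZMod q) ^ 3 * r ^ 2)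
  have h256 : (256 : ZMod q) ≠ 0 := by
    intro h
    have h' : ((256 : ℕ) : ZMod q) = 0 := by exact_mod_cast h
    rw [ZMod.natCast_eq_zero_iff, show 256 = 2 ^ 8 by norm_num] at h'
    have := Nat.le_of_dvd (by norm_num) (hq.dvd_of_dvd_pow h')
    omega
  have hdeg : F.natDegree = 3 := natDegree_cubic h256
  have hF0 : F ≠ 0 := by
    intro h; rw [h] at hdeg; simp at hdeg
  have hroots : F.roots.toFinset.card ≤ 3 :=
    (Multiset.toFinset_card_le _).trans (hdeg ▸ card_roots' F)
  have hq0 : (0 : ℤ) < q := by exact_mod_cast hq.pos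
  have hmaps : ∀ s ∈ S, ((s : ZMod q), s / (q : ℤ)) ∈
      F.roots.toFinset ×ˢ Finset.Icc (-4096 : ℤ) 4096 := by
    intro s hs
    obtain ⟨h1, h2⟩ := hS s hs
    rw [Finset.mem_product, Multiset.mem_toFinset, mem_roots hF0, Finset.mem_Icc]
    refine ⟨?_, ?_, ?_⟩
    · have h3 := (ZMod.intCast_zmod_eq_zero_iff_dvd _ q).mpr h2
      rw [IsRoot, ← h3]
      simp only [F, quarticD, eval_add, eval_mul, eval_C, eval_pow, eval_X]
      push_cast
      ring
    · rw [Int.le_ediv_iff_mul_le hq0]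
      linarith [(abs_le.mp h1).1]
    · have := Int.ediv_le_ediv hq0 (abs_le.mp h1).2
      rwa [Int.mul_ediv_cancel _ hq0.ne'] at this
  have hinj : Set.InjOn (fun s : ℤ => ((s : ZMod q), s / (q : ℤ))) S := by
    intro s _ t _ hst
    simp only [Prod.mk.injEq] at hst
    have h1 := (ZMod.intCast_eq_intCast_iff' _ _ _).mp hst.1
    rw [← Int.emod_add_mul_ediv s q, ← Int.emod_add_mul_ediv t q, h1, hst.2]
  have := Finset.card_le_card_of_injOn _ hmaps hinj
  rw [Finset.card_product, Int.card_Icc] at this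
  rw [show (4096 + 1 - -4096 : ℤ).toNat = 8193 by rfl] at this
  omega

/-- The finite set of admissible coefficient triples. -/
def tripleSet (q : ℕ) : Set (ℤ × ℤ × ℤ) :=
  {t | |(t.1 : ℝ)| ≤ 384 * (q : ℝ) ^ ((1 : ℝ) / 3) ∧ |(t.2.1 : ℝ)| ≤ 2048 * (q : ℝ) ^ ((1 : ℝ) / 2) ∧
    |t.2.2| ≤ 4096 * q ∧ (q : ℤ) ∣ quarticD t.1 t.2.1 t.2.2}

lemma card_Icc_le (A y : ℝ) (hA : 0 ≤ A) (hy : 1 ≤ y) :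
    ((Finset.Icc (-⌊A * y⌋) ⌊A * y⌋).card : ℝ) ≤ (2 * A + 1) * y := by
  have h0 : 0 ≤ A * y := by positivity
  have h1 : 0 ≤ ⌊A * y⌋ := Int.floor_nonneg.mpr h0
  rw [Int.card_Icc]
  have h2 : (((⌊A * y⌋ + 1 - -⌊A * y⌋).toNat : ℕ) : ℝ) = 2 * (⌊A * y⌋ : ℝ) + 1 := by
    have : (((⌊A * y⌋ + 1 - -⌊A * y⌋).toNat : ℕ) : ℤ) = 2 * ⌊A * y⌋ + 1 := by omega
    exact_mod_cast this
  rw [h2]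
  have := Int.floor_le (A * y)
  nlinarith

lemma mem_Icc_of_abs_le (A : ℝ) (n : ℤ) (h : |(n : ℝ)| ≤ A) : n ∈ Finset.Icc (-⌊A⌋) ⌊A⌋ := by
  have h' : |n| ≤ ⌊A⌋ := Int.le_floor.mpr (by push_cast; exact h)
  rw [Finset.mem_Icc]
  exact abs_le.mp h'

lemma tripleSet_card (q : ℕ) (hq : q.Prime) (hq2 : 2 < q) :
    (tripleSet q).Finite ∧
      ((tripleSet q).ncard : ℝ) ≤ 24579 * 769 * 4097 * (q : ℝ) ^ ((5 : ℝ) / 6) := by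
  classical
  have hq1 : (1 : ℝ) ≤ q := by exact_mod_cast hq.one_le
  have hq0 : (0 : ℝ) < q := by linarith
  set I := Finset.Icc (-⌊384 * (q : ℝ) ^ ((1 : ℝ) / 3)⌋) ⌊384 * (q : ℝ) ^ ((1 : ℝ) / 3)⌋ with hI
  set J := Finset.Icc (-⌊2048 * (q : ℝ) ^ ((1 : ℝ) / 2)⌋) ⌊2048 * (q : ℝ) ^ ((1 : ℝ) / 2)⌋ with hJ
  let Sf : ℤ × ℤ → Finset ℤ := fun u =>
    (Finset.Icc (-(4096 * (q : ℤ))) (4096 * q)).filter fun s => (q : ℤ) ∣ quarticD u.1 u.2 s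
  let T : Finset (ℤ × ℤ × ℤ) := (I ×ˢ J).biUnion fun u => (Sf u).image fun s => (u.1, u.2, s)
  have hsub : tripleSet q ⊆ T := by
    rintro ⟨p, r, s⟩ ⟨h1, h2, h3, h5⟩
    simp only [T, Finset.coe_biUnion, Set.mem_iUnion]
    refine ⟨(p, r), ?_, ?_⟩
    · exact Finset.mem_product.mpr ⟨mem_Icc_of_abs_le _ _ h1, mem_Icc_of_abs_le _ _ h2⟩
    · rw [Finset.mem_coe, Finset.mem_image]
      exact ⟨s, Finset.mem_filter.mpr ⟨Finset.mem_Icc.mpr (abs_le.mp h3), h5⟩, rfl⟩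
  have hcard : T.card ≤ (I.card * J.card) * 24579 := by
    rw [← Finset.card_product]
    refine Finset.card_biUnion_le_card_mul _ _ _ fun u _ => Finset.card_image_le.trans ?_
    refine card_s_le q hq hq2 u.1 u.2 _ fun s hs => ?_
    rw [Finset.mem_filter, Finset.mem_Icc] at hs
    exact ⟨abs_le.mpr hs.1, hs.2⟩
  refine ⟨T.finite_toSet.subset hsub, ?_⟩
  have h1 : (tripleSet q).ncard ≤ T.card := by
    rw [← Set.ncard_coe_finset]
    exact Set.ncard_le_ncard hsub T.finite_toSet
  have hIc := card_Icc_le 384 ((q : ℝ) ^ ((1 : ℝ) / 3)) (by norm_num)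
    (Real.one_le_rpow hq1 (by norm_num))
  have hJc := card_Icc_le 2048 ((q : ℝ) ^ ((1 : ℝ) / 2)) (by norm_num)
    (Real.one_le_rpow hq1 (by norm_num))
  rw [← hI] at hIc
  rw [← hJ] at hJc
  calc ((tripleSet q).ncard : ℝ) ≤ ((I.card * J.card) * 24579 : ℕ) := by
        exact_mod_cast h1.trans hcard
    _ = (I.card : ℝ) * J.card * 24579 := by push_cast; ring
    _ ≤ ((2 * 384 + 1) * (q : ℝ) ^ ((1 : ℝ) / 3)) * ((2 * 2048 + 1) * (q : ℝ) ^ ((1 : ℝ) / 2))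
        * 24579 := by gcongr
    _ = 24579 * 769 * 4097 * ((q : ℝ) ^ ((1 : ℝ) / 3) * (q : ℝ) ^ ((1 : ℝ) / 2)) := by ring
    _ = _ := by rw [← Real.rpow_add hq0]; norm_num

open NumberField IntermediateField Polynomial in
lemma exists_triple (K : Type*) [Field K] [NumberField K] (q : ℕ) (hq : q.Prime)
    (h4 : Module.finrank ℚ K = 4) (hd : discr K = -(q : ℤ)) :
    ∃ t ∈ tripleSet q, ∃ b : K, ℚ⟮b⟯ = ⊤ ∧
      minpoly ℚ b = X ^ 4 + C (t.1 : ℚ) * X ^ 2 + C (t.2.1 : ℚ) * X + C (t.2.2 : ℚ) := by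
  obtain ⟨a, ha, hw⟩ := exists_small_integer K q hq h4 hd
  have hq0 : (0 : ℝ) ≤ q := Nat.cast_nonneg q
  have hq1 : (1 : ℝ) ≤ q := by exact_mod_cast hq.one_le
  set y : ℝ := (q : ℝ) ^ ((1 : ℝ) / 6) with hy
  have hemb := (InfinitePlace.le_iff_le (a : K) y).mp hw
  set n : ℤ := Algebra.trace ℤ (𝓞 K) a with hn
  have hnt : (n : ℚ) = Algebra.trace ℚ K (a : K) := Algebra.coe_trace_int a
  have hnb : ‖(n : ℂ)‖ ≤ 4 * y := by
    have h := trace_eq_sum_embeddings (K := ℚ) (L := K) ℂ (x := (a : K))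
    rw [← hnt] at h
    have h' : (n : ℂ) = ∑ σ : K →ₐ[ℚ] ℂ, σ (a : K) := by
      rw [← h]; simp
    rw [h']
    refine (norm_sum_le _ _).trans ?_
    have h2 : ∑ σ : K →ₐ[ℚ] ℂ, ‖σ (a : K)‖ ≤ ∑ _σ : K →ₐ[ℚ] ℂ, y :=
      Finset.sum_le_sum fun σ _ => hemb (σ : K →+* ℂ)
    refine h2.trans ?_
    rw [Finset.sum_const, Finset.card_univ, AlgHom.card, h4]
    simp
  let b : 𝓞 K := 4 * a - n
  have hbK : (b : K) = 4 * (a : K) - (n : K) := by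
    simp only [b, map_sub, map_mul, map_ofNat, map_intCast]
  have hbtr : Algebra.trace ℚ K (b : K) = 0 := by
    have e : (b : K) = (4 : ℚ) • (a : K) - algebraMap ℚ K n := by
      rw [hbK, Algebra.smul_def]; simp
    rw [e, map_sub, map_smul, Algebra.trace_algebraMap, h4, ← hnt]
    simp
  have hbR : ∀ φ : K →+* ℂ, ‖φ (b : K)‖ ≤ 8 * y := by
    intro φ
    rw [hbK, map_sub, map_mul, map_intCast, map_ofNat]
    refine (norm_sub_le _ _).trans ?_
    rw [norm_mul]
    have := hemb φ
    have h4n : ‖(4 : ℂ)‖ = 4 := by simp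
    rw [h4n]
    linarith
  have hbQ : ∀ r : ℚ, (b : K) ≠ algebraMap ℚ K r := by
    intro r hr
    have h1 : (a : K) = algebraMap ℚ K ((r + n) / 4) := by
      rw [hbK] at hr
      rw [map_div₀, map_add, ← hr]
      simp
    have hint : IsIntegral ℤ ((r + n) / 4 : ℚ) := by
      have h2 : IsIntegral ℤ (a : K) := a.isIntegral_coe
      rw [h1] at h2
      exact (isIntegral_algebraMap_iff (algebraMap ℚ K).injective).mp h2
    obtain ⟨m, hm⟩ := IsIntegrallyClosed.isIntegral_iff.mp hint
    apply ha m
    apply RingOfIntegers.coe_injective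
    change (a : K) = _
    rw [h1, ← hm]
    simp
  have htop := adjoin_eq_top_of_prime_disc K q hq hd (b : K) hbQ
  obtain ⟨p, r, s, hmin, hp, hr, hs, hdvd⟩ := exists_quartic_poly K h4 b htop hbtr (8 * y) hbR
  have hy2 : y ^ 2 = (q : ℝ) ^ ((1 : ℝ) / 3) := by
    rw [hy, ← Real.rpow_natCast, ← Real.rpow_mul hq0]; norm_num
  have hy3 : y ^ 3 = (q : ℝ) ^ ((1 : ℝ) / 2) := by
    rw [hy, ← Real.rpow_natCast, ← Real.rpow_mul hq0]; norm_num
  have hy4 : y ^ 4 ≤ q := by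
    rw [hy, ← Real.rpow_natCast, ← Real.rpow_mul hq0]
    calc (q : ℝ) ^ ((1 : ℝ) / 6 * (4 : ℕ)) ≤ (q : ℝ) ^ (1 : ℝ) :=
          Real.rpow_le_rpow_of_exponent_le hq1 (by norm_num)
      _ = q := Real.rpow_one _
  refine ⟨(p, r, s), ⟨?_, ?_, ?_, ?_⟩, (b : K), htop, hmin⟩
  · rw [← hy2]
    calc |(p : ℝ)| ≤ 6 * (8 * y) ^ 2 := hp
      _ = 384 * y ^ 2 := by ring
  · rw [← hy3]
    calc |(r : ℝ)| ≤ 4 * (8 * y) ^ 3 := hr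
      _ = 2048 * y ^ 3 := by ring
  · have : |(s : ℝ)| ≤ 4096 * q := by
      calc |(s : ℝ)| ≤ (8 * y) ^ 4 := hs
        _ = 4096 * y ^ 4 := by ring
        _ ≤ 4096 * q := by linarith
    change |s| ≤ 4096 * (q : ℤ)
    exact_mod_cast this
  · rw [hd] at hdvd
    exact (neg_dvd).mp hdvd

open IntermediateField in
lemma ringEquiv_of_minpoly_eq {K L : Type*} [Field K] [NumberField K] [Field L] [NumberField L]
    (a : K) (b : L) (ha : ℚ⟮a⟯ = ⊤) (hb : ℚ⟮b⟯ = ⊤) (h : minpoly ℚ a = minpoly ℚ b) :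
    Nonempty (K ≃+* L) := by
  have e1 := adjoinRootEquivAdjoin ℚ (IsIntegral.of_finite ℚ a)
  have e2 := adjoinRootEquivAdjoin ℚ (IsIntegral.of_finite ℚ b)
  rw [ha] at e1
  rw [hb, ← h] at e2
  exact ⟨((topEquiv.symm.trans e1.symm).trans (e2.trans topEquiv)).toRingEquiv⟩

lemma numberField_of_isQuartic {q : ℕ} {K : Subfield ℂ} (hK : IsQuarticOfDisc q K) :
    NumberField K := by
  have : FiniteDimensional ℚ K := Module.finite_of_finrank_pos (by rw [hK.1]; norm_num)
  exact { to_charZero := inferInstance, to_finiteDimensional := this }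

lemma m₄_le (q : ℕ) (hq : q.Prime) :
    (m₄ q : ℝ) ≤ 24579 * 769 * 4097 * (q : ℝ) ^ ((5 : ℝ) / 6) := by
  classical
  rcases isEmpty_or_nonempty (Quotient (quarticSetoid q)) with hE | hN
  · have : m₄ q = 0 := by rw [m₄]; exact Nat.card_of_isEmpty
    rw [this]
    simp only [Nat.cast_zero]
    positivity
  have hq2 : 2 < q := by
    obtain ⟨u₀⟩ := hN
    let x₀ := Quotient.out u₀
    have := numberField_of_isQuartic x₀.2
    have h1 := NumberField.abs_discr_gt_two (K := x₀.1) (by rw [x₀.2.1]; norm_num)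
    rw [x₀.2.2, abs_neg, Nat.abs_cast] at h1
    exact_mod_cast h1
  have key : ∀ u : Quotient (quarticSetoid q), ∃ t ∈ tripleSet q, ∃ b : u.out.1,
      IntermediateField.adjoin ℚ {b} = ⊤ ∧ minpoly ℚ b = Polynomial.X ^ 4
        + Polynomial.C (t.1 : ℚ) * Polynomial.X ^ 2 + Polynomial.C (t.2.1 : ℚ) * Polynomial.X
        + Polynomial.C (t.2.2 : ℚ) := by
    intro u
    have := numberField_of_isQuartic u.out.2
    exact exists_triple u.out.1 q hq u.out.2.1 u.out.2.2
  choose f hf b hb hmin using key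
  obtain ⟨hfin, hcard⟩ := tripleSet_card q hq hq2
  have hinj : Function.Injective fun u => (⟨f u, hf u⟩ : tripleSet q) := by
    intro u v huv
    have huv' : f u = f v := congrArg Subtype.val huv
    have i1 := numberField_of_isQuartic u.out.2
    have i2 := numberField_of_isQuartic v.out.2
    have hiso : Nonempty (u.out.1 ≃+* v.out.1) :=
      ringEquiv_of_minpoly_eq (b u) (b v) (hb u) (hb v) (by rw [hmin, hmin, huv'])
    rw [← Quotient.out_eq u, ← Quotient.out_eq v]
    exact Quotient.sound hiso
  have : Finite (tripleSet q) := hfin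
  have hle : m₄ q ≤ (tripleSet q).ncard := by
    rw [m₄, ← Nat.card_coe_set_eq]
    exact Nat.card_le_card_of_injective _ hinj
  calc (m₄ q : ℝ) ≤ (tripleSet q).ncard := by exact_mod_cast hle
    _ ≤ _ := hcard

/-- **Theorem 2:** for `q` prime, the number of quartic number fields of discriminant
`-q` satisfies `m₄(-q) ≪ q^{7/8} (log q)⁴`, with an absolute implied constant. -/
theorem quartic_field_count :
    ∃ C : ℝ, 0 < C ∧ ∀ q : ℕ, q.Prime →
      (m₄ q : ℝ) ≤ C * (q : ℝ) ^ ((7 : ℝ) / 8) * Real.log q ^ 4 := by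
  have hl2 : 0 < Real.log 2 := Real.log_pos (by norm_num)
  refine ⟨24579 * 769 * 4097 / Real.log 2 ^ 4, by positivity, fun q hq => ?_⟩
  have hq2 : (2 : ℝ) ≤ q := by exact_mod_cast hq.two_le
  have hlog : Real.log 2 ≤ Real.log q := Real.log_le_log (by norm_num) hq2
  calc (m₄ q : ℝ) ≤ 24579 * 769 * 4097 * (q : ℝ) ^ ((5 : ℝ) / 6) := m₄_le q hq
    _ ≤ 24579 * 769 * 4097 * (q : ℝ) ^ ((7 : ℝ) / 8) := by
        have := Real.rpow_le_rpow_of_exponent_le (x := (q : ℝ)) (by linarith)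
          (show (5 : ℝ) / 6 ≤ 7 / 8 by norm_num)
        linarith
    _ = 24579 * 769 * 4097 / Real.log 2 ^ 4 * (q : ℝ) ^ ((7 : ℝ) / 8) * Real.log 2 ^ 4 := by
        field_simp
    _ ≤ _ := by gcongr
end

section
/- Let c, e ∈ ℂ with e ≠ 0, and let (b_n)_{n≥0} be defined by b_0 = 1, b_1 = c, and b_{n+2} = c·b_{n+1} - e·b_n for n ≥ 0 (so Σ_{n≥0} b_n T^n = (1 - cT + eT²)^{-1}). Define polynomials P_n by P_0(x) = 1, P_1(x) = x, P_{n+1}(x) = (x-1)P_n(x) - P_{n-1}(x). Then for every n ≥ 0, b_{2n} = e^n · P_n(e^{-1} b_2). -/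
/-- The sequence of complex polynomial functions `P 0 = 1`, `P 1 = x`,
`P (n+2) (x) = (x - 1) * P (n+1) (x) - P n (x)`. -/
noncomputable def P : ℕ → ℂ → ℂ
  | 0 => fun _ => 1
  | 1 => fun x => x
  | (n + 2) => fun x => (x - 1) * P (n + 1) x - P n x

/-- Let `b` be the sequence of power series coefficients of the Euler factor
`(1 - c T + e T²)⁻¹`, i.e. `b 0 = 1`, `b 1 = c` and `b (n+2) = c * b (n+1) - e * b n`
(as occurs for the Fourier coefficients `a_f(pⁿ)` of a newform with `a_f(p) = c` and
character value `ε(p) = e ≠ 0`).  Then `b (2n) = eⁿ * P n (e⁻¹ * b 2)` for all `n`. -/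
theorem euler_factor_even_coeff (c e : ℂ) (he : e ≠ 0) (b : ℕ → ℂ)
    (hb0 : b 0 = 1) (hb1 : b 1 = c)
    (hrec : ∀ n : ℕ, b (n + 2) = c * b (n + 1) - e * b n) :
    ∀ n : ℕ, b (2 * n) = e ^ n * P n (e⁻¹ * b 2) := by
  have h2 : b 2 = c ^ 2 - e := by
    have h := hrec 0
    simp only [zero_add] at h
    rw [h, hb0, hb1]; ring
  have h4 : ∀ m, b (m + 4) = (c ^ 2 - 2 * e) * b (m + 2) - e ^ 2 * b m := by
    intro m
    linear_combination hrec (m + 2) + c * hrec (m + 1) + e * hrec m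
  have key : ∀ n : ℕ, b (2 * n) = e ^ n * P n (e⁻¹ * b 2) ∧
      b (2 * (n + 1)) = e ^ (n + 1) * P (n + 1) (e⁻¹ * b 2) := by
    intro n
    induction n with
    | zero =>
      refine ⟨by simp [P, hb0], ?_⟩
      simp [P, he]
    | succ k ih =>
      refine ⟨ih.2, ?_⟩
      have hP : P (k + 1 + 1) (e⁻¹ * b 2) =
          (e⁻¹ * b 2 - 1) * P (k + 1) (e⁻¹ * b 2) - P k (e⁻¹ * b 2) := by
        rw [P]
      have hx : e * (e⁻¹ * b 2 - 1) = c ^ 2 - 2 * e := by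
        rw [h2]; field_simp; ring
      have h := h4 (2 * k)
      have e1 : 2 * (k + 1 + 1) = 2 * k + 4 := by ring
      have e2 : 2 * k + 2 = 2 * (k + 1) := by ring
      rw [e1, h, e2, ih.1, ih.2, hP, ← hx]
      ring
  exact fun n => (key n).1
end

section
/- Let q be a positive integer and Y > 0, and set P(Y) = {z in the upper half-plane : 0 < Re z ≤ 1, Im z > Y}. Then for every z ∈ P(Y), the number of elements γ of Γ₀(q)/{±1} with γz ∈ P(Y) is at most 1 + 3/(qY). -/
open UpperHalfPlane MatrixGroups CongruenceSubgroup

/-- The region `P(Y) = {z ∈ ℍ : 0 < Re z ≤ 1, Im z > Y}`. -/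
def strip (Y : ℝ) : Set UpperHalfPlane := {z | 0 < z.re ∧ z.re ≤ 1 ∧ Y < z.im}

theorem neg_one_mem_Gamma0 (q : ℕ) : (-1 : SL(2, ℤ)) ∈ Gamma0 q := by
  have : ((-1 : SL(2, ℤ)) : Matrix (Fin 2) (Fin 2) ℤ) 1 0 = 0 := by
    simp [Matrix.SpecialLinearGroup.coe_neg]
  simp [Gamma0_mem, this]

/-- The subgroup `{±1}` of `Γ₀(q)`. -/
def pmOne (q : ℕ) : Subgroup (Gamma0 q) :=
  Subgroup.zpowers (⟨-1, neg_one_mem_Gamma0 q⟩ : Gamma0 q)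

/-- Elements with the same bottom row moving `z` to the strip agree. -/
theorem eq_of_bottom_row {Y : ℝ} {z : UpperHalfPlane} (g h : SL(2, ℤ))
    (h0 : g 1 0 = h 1 0) (h1 : g 1 1 = h 1 1)
    (hg : g • z ∈ strip Y) (hh : h • z ∈ strip Y) : g = h := by
  have dg := g.det_coe
  have dh := h.det_coe
  rw [Matrix.det_fin_two] at dg dh
  have key : g = ModularGroup.T ^ (g 0 1 * h 0 0 - g 0 0 * h 0 1) * h := by
    ext i j
    rw [Matrix.SpecialLinearGroup.coe_mul, ModularGroup.coe_T_zpow]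
    fin_cases i <;> fin_cases j <;> simp [Matrix.mul_apply, Fin.sum_univ_two, h0, h1]
    · rw [h0, h1] at dg
      linear_combination (-g 0 0) * dh + h 0 0 * dg
    · rw [h0, h1] at dg
      linear_combination (-g 0 1) * dh + h 0 1 * dg
  generalize g 0 1 * h 0 0 - g 0 0 * h 0 1 = n at key
  have hre : (g • z).re = (h • z).re + n := by
    rw [key, mul_smul, ModularGroup.re_T_zpow_smul]
  obtain ⟨g1, g2, -⟩ := hg
  obtain ⟨k1, k2, -⟩ := hh
  have n1 : (n : ℝ) < 1 := by linarith
  have n2 : (-1 : ℝ) < n := by linarith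
  have n1' : n < 1 := by exact_mod_cast n1
  have n2' : -1 < n := by exact_mod_cast n2
  have : n = 0 := by omega
  rw [key, this]; simp

theorem normSq_lt {Y : ℝ} (hY : 0 < Y) {z : UpperHalfPlane} (g : SL(2, ℤ))
    (hg : g • z ∈ strip Y) :
    ((g 1 0 : ℝ) * z.re + g 1 1) ^ 2 + ((g 1 0 : ℝ) * z.im) ^ 2 < z.im / Y := by
  have h := hg.2.2
  rw [ModularGroup.im_smul_eq_div_normSq, ModularGroup.denom_apply] at h
  have e : Complex.normSq ((g 1 0 : ℂ) * z + g 1 1) =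
    ((g 1 0 : ℝ) * z.re + g 1 1) ^ 2 + ((g 1 0 : ℝ) * z.im) ^ 2 := by
    simp [Complex.normSq_apply]; ring
  rw [e] at h
  have hp : 0 < ((g 1 0 : ℝ) * z.re + g 1 1) ^ 2 + ((g 1 0 : ℝ) * z.im) ^ 2 := by
    by_contra hc
    have : ((g 1 0 : ℝ) * z.re + g 1 1) ^ 2 + ((g 1 0 : ℝ) * z.im) ^ 2 = 0 :=
      le_antisymm (not_lt.mp hc) (by positivity)
    rw [this] at h; simp at h; linarith
  rw [lt_div_iff₀ hp] at h
  rw [lt_div_iff₀ hY]; linarith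

theorem exists_rep {q : ℕ} {Y : ℝ} {z : UpperHalfPlane} (x : Gamma0 q ⧸ pmOne q)
    (hx : ∃ γ : Gamma0 q, QuotientGroup.mk γ = x ∧ ((γ : SL(2, ℤ)) • z) ∈ strip Y) :
    ∃ γ : Gamma0 q, QuotientGroup.mk γ = x ∧ ((γ : SL(2, ℤ)) • z) ∈ strip Y ∧
      (0 < (γ : SL(2, ℤ)) 1 0 ∨ ((γ : SL(2, ℤ)) 1 0 = 0 ∧ (γ : SL(2, ℤ)) 1 1 = 1)) := by
  obtain ⟨γ, h1, h2⟩ := hx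
  by_cases hc : (0 < (γ : SL(2, ℤ)) 1 0 ∨ ((γ : SL(2, ℤ)) 1 0 = 0 ∧ (γ : SL(2, ℤ)) 1 1 = 1))
  · exact ⟨γ, h1, h2, hc⟩
  · refine ⟨γ * ⟨-1, neg_one_mem_Gamma0 q⟩, ?_, ?_, ?_⟩
    · rw [← h1, QuotientGroup.eq]
      simp only [mul_inv_rev, inv_mul_cancel_right]
      exact inv_mem (Subgroup.mem_zpowers _)
    · have e : ((γ * ⟨-1, neg_one_mem_Gamma0 q⟩ : Gamma0 q) : SL(2, ℤ)) = -(γ : SL(2, ℤ)) := by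
        simp
      rw [e, ModularGroup.SL_neg_smul]
      exact h2
    · have dg := (γ : SL(2, ℤ)).det_coe
      rw [Matrix.det_fin_two] at dg
      simp only [Subgroup.coe_mul, mul_neg, mul_one, Matrix.SpecialLinearGroup.coe_neg,
        Matrix.neg_apply]
      push Not at hc
      rcases hc.1.lt_or_eq with h | h
      · left; omega
      · right
        rw [h] at dg
        simp only [mul_zero, sub_zero] at dg
        have := hc.2 h
        rcases Int.eq_one_or_neg_one_of_mul_eq_one' dg with h' | h'
        · exact absurd h'.2 this
        · exact ⟨by omega, by omega⟩

/-- For a positive integer `q`, `Y > 0` and `z` in the region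
`P(Y) = {z : 0 < Re z ≤ 1, Im z > Y}`, the number of elements `γ` of `Γ₀(q)/{±1}`
with `γ z ∈ P(Y)` is at most `1 + 3/(qY)`.  (Since `-1` acts trivially on the upper
half-plane, the condition `γ z ∈ P(Y)` is well defined on the quotient `Γ₀(q)/{±1}`;
it is expressed here via a representative.) -/
theorem count_in_strip (q : ℕ) (hq : 0 < q) (Y : ℝ) (hY : 0 < Y)
    (z : UpperHalfPlane) (hz : z ∈ strip Y) :
    (Set.ncard {x : Gamma0 q ⧸ pmOne q |
        ∃ γ : Gamma0 q, QuotientGroup.mk γ = x ∧ ((γ : SL(2, ℤ)) • z) ∈ strip Y} : ℝ) ≤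
      1 + 3 / (q * Y) := by
  classical
  set S := {x : Gamma0 q ⧸ pmOne q |
        ∃ γ : Gamma0 q, QuotientGroup.mk γ = x ∧ ((γ : SL(2, ℤ)) • z) ∈ strip Y} with hS
  have hy : 0 < z.im := z.im_pos
  have hyY : Y < z.im := hz.2.2
  have hq' : (0 : ℝ) < q := by exact_mod_cast hq
  obtain ⟨A, hA, hA2⟩ : ∃ A : ℝ, 0 < A ∧ A ^ 2 = z.im / Y :=
    ⟨√(z.im / Y), Real.sqrt_pos.mpr (by positivity), Real.sq_sqrt (by positivity)⟩
  let r : Gamma0 q ⧸ pmOne q → Gamma0 q := fun x =>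
    if hx : x ∈ S then (exists_rep x hx).choose else 1
  have hr : ∀ x ∈ S, QuotientGroup.mk (r x) = x ∧ ((r x : SL(2, ℤ)) • z) ∈ strip Y ∧
      (0 < (r x : SL(2, ℤ)) 1 0 ∨ ((r x : SL(2, ℤ)) 1 0 = 0 ∧ (r x : SL(2, ℤ)) 1 1 = 1)) := by
    intro x hx
    have := (exists_rep x hx).choose_spec
    simpa only [r, dif_pos hx] using this
  let D : ℤ → Finset ℤ := fun c => Finset.Icc (⌊-(c * z.re) - A⌋ + 1) (⌈A - c * z.re⌉ - 1)
  have hD : ∀ c, ((D c).card : ℝ) ≤ 2 * A + 1 := by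
    intro c
    simp only [D, Int.card_Icc]
    have h1 := Int.lt_floor_add_one (-(c * z.re) - A)
    have h2 := Int.ceil_lt_add_one (A - c * z.re)
    have : (((⌈A - c * z.re⌉ - 1 + 1 - (⌊-(c * z.re) - A⌋ + 1)).toNat : ℤ) : ℝ) ≤ 2 * A + 1 := by
      rw [Int.toNat_eq_max]
      push_cast
      apply max_le <;> linarith
    exact_mod_cast this
  let K : ℕ := ⌊A / (q * z.im)⌋₊
  let U : Finset (ℤ × ℤ) := (Finset.Icc 1 K).biUnion fun k =>
    (D (q * k)).image fun d => ((q * k : ℤ), d)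
  let T : Finset (ℤ × ℤ) := insert (0, 1) U
  have hU : (U.card : ℝ) ≤ K * (2 * A + 1) := by
    have h1 : U.card ≤ ∑ k ∈ Finset.Icc 1 K, (D (q * k)).card :=
      Finset.card_biUnion_le.trans (Finset.sum_le_sum fun k _ => Finset.card_image_le)
    calc (U.card : ℝ) ≤ ∑ k ∈ Finset.Icc 1 K, ((D (q * k)).card : ℝ) := by exact_mod_cast h1
      _ ≤ ∑ k ∈ Finset.Icc 1 K, (2 * A + 1) := Finset.sum_le_sum fun k _ => hD _
      _ = K * (2 * A + 1) := by simp; ring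
  have hT : (T.card : ℝ) ≤ 1 + K * (2 * A + 1) := by
    have : (T.card : ℝ) ≤ U.card + 1 := by exact_mod_cast Finset.card_insert_le _ _
    linarith
  have hST : S.ncard ≤ (T : Set (ℤ × ℤ)).ncard := by
    refine Set.ncard_le_ncard_of_injOn
      (fun x => ((r x : SL(2, ℤ)) 1 0, (r x : SL(2, ℤ)) 1 1)) ?_ ?_ T.finite_toSet
    · intro x hx
      obtain ⟨-, hs, hc⟩ := hr x hx
      have hn := normSq_lt hY _ hs
      have hmem := (r x).2
      rw [Gamma0_mem, ZMod.intCast_zmod_eq_zero_iff_dvd] at hmem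
      obtain ⟨k, hk⟩ := hmem
      generalize (r x : SL(2, ℤ)) 1 0 = c at *
      generalize (r x : SL(2, ℤ)) 1 1 = d at *
      rw [← hA2] at hn
      rcases hc with hc | ⟨rfl, rfl⟩
      swap
      · simp [T]
      have hkpos : 0 < k := by
        have : (0 : ℤ) < q := by exact_mod_cast hq
        rw [hk] at hc
        exact pos_of_mul_pos_right hc this.le
      lift k to ℕ using hkpos.le
      have b1 : |(c : ℝ) * z.re + d| < A :=
        abs_lt_of_sq_lt_sq (by nlinarith [sq_nonneg ((c : ℝ) * z.im)]) hA.le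
      have b2 : (c : ℝ) * z.im < A :=
        lt_of_pow_lt_pow_left₀ 2 hA.le (by nlinarith [sq_nonneg ((c : ℝ) * z.re + d)])
      rw [abs_lt] at b1
      have hmU : (c, d) ∈ U := by
        simp only [U, Finset.mem_biUnion, Finset.mem_Icc, Finset.mem_image]
        refine ⟨k, ⟨by omega, ?_⟩, d, ?_, by rw [hk]⟩
        · apply Nat.le_floor
          rw [le_div_iff₀ (by positivity)]
          rw [hk] at b2
          push_cast at b2
          linarith
        · rw [← hk]
          simp only [D, Finset.mem_Icc]
          constructor
          · rw [Int.add_one_le_iff, Int.floor_lt]; linarith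
          · rw [Int.le_sub_one_iff, Int.lt_ceil]; linarith
      exact Finset.mem_coe.mpr (Finset.mem_insert_of_mem hmU)
    · intro x hx x' hx' he
      obtain ⟨e1, hs, -⟩ := hr x hx
      obtain ⟨e2, hs', -⟩ := hr x' hx'
      simp only [Prod.mk.injEq] at he
      have := eq_of_bottom_row _ _ he.1 he.2 hs hs'
      rw [← e1, ← e2, Subtype.ext this]
  rw [Set.ncard_coe_finset] at hST
  have hST' : (S.ncard : ℝ) ≤ T.card := by exact_mod_cast hST
  have hK : (K : ℝ) ≤ A / (q * z.im) := Nat.floor_le (by positivity)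
  have hAy : A * Y ≤ z.im := by
    refine (sq_le_sq₀ (by positivity) hy.le).mp ?_
    rw [mul_pow, hA2]
    field_simp
    nlinarith
  have hfin : A / (q * z.im) * (2 * A + 1) ≤ 3 / (q * Y) := by
    have e : A ^ 2 * Y = z.im := by rw [hA2]; field_simp
    rw [div_mul_eq_mul_div, div_le_div_iff₀ (by positivity) (by positivity)]
    have : A * (2 * A + 1) * Y ≤ 3 * z.im := by nlinarith
    nlinarith
  have : (K : ℝ) * (2 * A + 1) ≤ A / (q * z.im) * (2 * A + 1) :=
    mul_le_mul_of_nonneg_right hK (by positivity)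
  linarith
end
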